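/- arXiv:2210.13644 — 2 statements merged into one kernel-verified Lean document; each statement's English description precedes it below -/
import Mathlib

section
/- Let (m₁,m₂,m₃,ξ,p) be a collision solution of the reduced two-body system on [t₀, t*) with t* < ∞ and ξ(t) → +∞ as t → t*⁻. Then 2m₃ξ − m₂ decays at least like ξ^{−1/2}: there exist M > 0 and t₁ ∈ [t₀, t*) such that |2·m₃(t)·ξ(t) − m₂(t)| · √(ξ(t)) ≤ M for all t ∈ [t₁, t*). -/
open Filter Set

/-!
Write `u = 2p − m₁`, `w = 2m₃ξ − m₂` and `y = w / ξ`. Conservation of `m₁² + m₂² + m₃²` and of the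
energy gives `u² + w² = 4ξ + O(1)`, hence `w = O(√ξ)` and `y → 0` at the collision. Moreover
`u' > 0` wherever `u = 0` and `ξ` is large; as `ξ' = −(ξ² + 1)u`, a positive value of `u` would
make `ξ` decrease from then on, so `u ≤ 0` and `ξ` is eventually increasing. Finally
`y' = (u (w − 3m₂) + m₁ (w + m₂)) / (4ξ²)`, where the first term is dominated by `(3/2) ξ' / ξ³`
and the second is `O(ξ^(−3/2))`. Integrating backwards from the collision gives `y = O(ξ^(−3/2))`.
-/

open scoped Topology

section Calculus

theorem eq_of_forall_hasDerivAt_zero {E : Type*} [NormedAddCommGroup E] [NormedSpace ℝ E]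
    {f : ℝ → E} {s : Set ℝ} (hs : s.OrdConnected) (hf : ∀ t ∈ s, HasDerivAt f 0 t)
    {x y : ℝ} (hx : x ∈ s) (hy : y ∈ s) : f x = f y := by
  have hbound := hs.convex.norm_image_sub_le_of_norm_hasDerivWithin_le (C := 0)
    (fun t ht ↦ (hf t ht).hasDerivWithinAt) (fun _ _ ↦ norm_zero.le) hy hx
  rw [zero_mul] at hbound
  exact sub_eq_zero.1 (norm_le_zero_iff.1 hbound)

theorem nonneg_of_hasDerivAt_pos_of_eq_zero {f f' : ℝ → ℝ} {a b : ℝ}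
    (hf : ∀ t ∈ Ico a b, HasDerivAt f (f' t) t) (hpos : ∀ t ∈ Ico a b, f t = 0 → 0 < f' t)
    (ha : 0 ≤ f a) : ∀ t ∈ Ico a b, 0 ≤ f t := by
  intro t ht
  have hsub : Icc a t ⊆ Ico a b := Icc_subset_Ico_right ht.2
  refine image_le_of_deriv_right_lt_deriv_boundary' (f := fun _ ↦ 0) (f' := fun _ ↦ 0)
    continuousOn_const (fun r _ ↦ hasDerivWithinAt_const r _ 0) ha
    (fun r hr ↦ (hf r (hsub hr)).continuousAt.continuousWithinAt)
    (fun r hr ↦ (hf r (hsub (Ico_subset_Icc_self hr))).hasDerivWithinAt)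
    (fun r hr hzero ↦ hpos r (hsub (Ico_subset_Icc_self hr)) hzero.symm) (right_mem_Icc.2 ht.1)

theorem norm_sub_le_of_tendsto_of_norm_deriv_le {E : Type*} [NormedAddCommGroup E]
    [NormedSpace ℝ E] {f f' : ℝ → E} {g g' : ℝ → ℝ} {a b L : ℝ} {l : E} (hab : a < b)
    (hf : ∀ t ∈ Ico a b, HasDerivAt f (f' t) t) (hg : ∀ t ∈ Ico a b, HasDerivAt g (g' t) t)
    (hle : ∀ t ∈ Ico a b, ‖f' t‖ ≤ g' t)
    (hfl : Tendsto f (𝓝[<] b) (𝓝 l)) (hgL : Tendsto g (𝓝[<] b) (𝓝 L)) :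
    ‖l - f a‖ ≤ L - g a := by
  have hinc : ∀ t ∈ Ico a b, ‖f t - f a‖ ≤ g t - g a := by
    intro t ht
    have hsub : Icc a t ⊆ Ico a b := Icc_subset_Ico_right ht.2
    exact image_norm_le_of_norm_deriv_right_le_deriv_boundary'
      (f := fun r ↦ f r - f a) (B := fun r ↦ g r - g a)
      (fun r hr ↦ ((hf r (hsub hr)).sub_const _).continuousAt.continuousWithinAt)
      (fun r hr ↦ ((hf r (hsub (Ico_subset_Icc_self hr))).sub_const _).hasDerivWithinAt)
      (by simp)
      (fun r hr ↦ ((hg r (hsub hr)).sub_const _).continuousAt.continuousWithinAt)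
      (fun r hr ↦ ((hg r (hsub (Ico_subset_Icc_self hr))).sub_const _).hasDerivWithinAt)
      (fun r hr ↦ hle r (hsub (Ico_subset_Icc_self hr))) (right_mem_Icc.2 ht.1)
  refine le_of_tendsto_of_tendsto (hfl.sub_const (f a)).norm (hgL.sub_const (g a)) ?_
  filter_upwards [Ico_mem_nhdsLT hab] with t ht using hinc t ht

end Calculus

/-- A point of the phase space `ℝ⁵` of the reduced two-body system on the sphere, where
`xi = cot q` encodes the distance `q` between the two bodies. -/
structure ReducedState where
  m1 : ℝ
  m2 : ℝ
  m3 : ℝ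
  xi : ℝ
  p : ℝ

namespace ReducedState

/-- The squared length of the angular momentum, a first integral. -/
def casimir (z : ReducedState) : ℝ := z.m1 ^ 2 + z.m2 ^ 2 + z.m3 ^ 2

/-- The Hamiltonian of the reduced system, a first integral. -/
def energy (z : ReducedState) : ℝ :=
  z.p ^ 2 - z.m1 * z.p - z.xi - z.m2 * z.m3 * z.xi + z.m3 ^ 2 * z.xi ^ 2

/-- The quantity `2p − m₁`, which is the velocity `q'` of the distance because
`ξ = cot q` and `ξ' = −(ξ² + 1)(2p − m₁)`. -/
def radialVelocity (z : ReducedState) : ℝ := 2 * z.p - z.m1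

/-- The quantity `2m₃ξ − m₂`, which complements the radial velocity in the energy balance
`sq_radialVelocity_add_sq_transverseVelocity`. -/
def transverseVelocity (z : ReducedState) : ℝ := 2 * z.m3 * z.xi - z.m2

/-- The derivative of `radialVelocity` along solutions, in a form valid where `ξ ≠ 0`. -/
noncomputable def radialAcceleration (z : ReducedState) : ℝ :=
  ((z.xi ^ 2 + 1) * (z.transverseVelocity ^ 2 - 2 * z.xi)
    - (z.transverseVelocity - z.m2) ^ 2 / 4) / z.xi

/-- The derivative of `transverseVelocity / xi` along solutions, where `ξ ≠ 0`. -/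
noncomputable def transverseRatioRate (z : ReducedState) : ℝ :=
  (z.radialVelocity * (z.transverseVelocity - 3 * z.m2)
    + z.m1 * (z.transverseVelocity + z.m2)) / (4 * z.xi ^ 2)

/-- The states whose `ξ` is large compared with the two first integrals. The second bound is chosen
to bring `radialVelocity² + transverseVelocity²` within `ξ` of `4ξ`. -/
structure IsNearCollision (z : ReducedState) : Prop where
  two_le_xi : 2 ≤ z.xi
  integrals_le_xi : 4 * |z.energy| + z.casimir ≤ z.xi

theorem sq_radialVelocity_add_sq_transverseVelocity (z : ReducedState) :
    z.radialVelocity ^ 2 + z.transverseVelocity ^ 2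
      = 4 * z.xi + (4 * z.energy + z.m1 ^ 2 + z.m2 ^ 2) := by
  simp only [radialVelocity, transverseVelocity, energy]
  ring

theorem abs_m1_le_sqrt_casimir (z : ReducedState) : |z.m1| ≤ √z.casimir := by
  refine Real.abs_le_sqrt ?_
  rw [casimir]
  linarith [sq_nonneg z.m2, sq_nonneg z.m3]

namespace IsNearCollision

variable {z : ReducedState}

theorem xi_pos (hz : z.IsNearCollision) : 0 < z.xi := by linarith [hz.two_le_xi]

theorem sq_m2_le_xi (hz : z.IsNearCollision) : z.m2 ^ 2 ≤ z.xi := by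
  have hle := hz.integrals_le_xi
  rw [casimir] at hle
  linarith [abs_nonneg z.energy, sq_nonneg z.m1, sq_nonneg z.m3]

theorem abs_sq_add_sq_sub_le_xi (hz : z.IsNearCollision) :
    |z.radialVelocity ^ 2 + z.transverseVelocity ^ 2 - 4 * z.xi| ≤ z.xi := by
  have hle := hz.integrals_le_xi
  rw [casimir] at hle
  rw [sq_radialVelocity_add_sq_transverseVelocity, abs_le]
  constructor <;> linarith [neg_abs_le z.energy, le_abs_self z.energy, sq_nonneg z.m1,
    sq_nonneg z.m2, sq_nonneg z.m3, hz.two_le_xi]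

theorem sq_transverseVelocity_le (hz : z.IsNearCollision) :
    z.transverseVelocity ^ 2 ≤ 5 * z.xi := by
  linarith [(abs_le.1 hz.abs_sq_add_sq_sub_le_xi).2, sq_nonneg z.radialVelocity]

theorem abs_m2_le_sqrt_xi (hz : z.IsNearCollision) : |z.m2| ≤ √z.xi :=
  Real.abs_le_sqrt hz.sq_m2_le_xi

theorem abs_transverseVelocity_le (hz : z.IsNearCollision) :
    |z.transverseVelocity| ≤ 3 * √z.xi := by
  refine abs_le_of_sq_le_sq ?_ (by positivity)
  rw [mul_pow, Real.sq_sqrt hz.xi_pos.le]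
  linarith [hz.sq_transverseVelocity_le, hz.xi_pos]

theorem sqrt_xi_le_xi (hz : z.IsNearCollision) : √z.xi ≤ z.xi :=
  Real.sqrt_le_self_iff.2 (.inr (one_le_two.trans hz.two_le_xi))

theorem abs_transverseVelocity_sub_le (hz : z.IsNearCollision) :
    |z.transverseVelocity - 3 * z.m2| ≤ 6 * √z.xi := by
  have h2 := abs_le.1 hz.abs_m2_le_sqrt_xi
  have hw := abs_le.1 hz.abs_transverseVelocity_le
  rw [abs_le]
  constructor <;> linarith

theorem abs_transverseVelocity_add_le (hz : z.IsNearCollision) :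
    |z.transverseVelocity + z.m2| ≤ 4 * √z.xi := by
  have h2 := abs_le.1 hz.abs_m2_le_sqrt_xi
  have hw := abs_le.1 hz.abs_transverseVelocity_le
  rw [abs_le]
  constructor <;> linarith

theorem radialAcceleration_pos_of_radialVelocity_eq_zero (hz : z.IsNearCollision)
    (hu : z.radialVelocity = 0) :
    0 < z.radialAcceleration := by
  have hxi := hz.xi_pos
  have hw : 3 * z.xi ≤ z.transverseVelocity ^ 2 := by
    have hlow := (abs_le.1 hz.abs_sq_add_sq_sub_le_xi).1
    rw [hu] at hlow
    linarith
  have hdiff : (z.transverseVelocity - z.m2) ^ 2 / 4 ≤ 3 * z.xi := by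
    linarith [sq_nonneg (z.transverseVelocity + z.m2), hz.sq_transverseVelocity_le,
      hz.sq_m2_le_xi]
  have hmain : 5 * z.xi ≤ (z.xi ^ 2 + 1) * (z.transverseVelocity ^ 2 - 2 * z.xi) :=
    mul_le_mul (by nlinarith [hz.two_le_xi]) (by linarith) hxi.le (by positivity)
  exact div_pos (by linarith) hxi

theorem abs_transverseRatioRate_le (hz : z.IsNearCollision)
    (hu : z.radialVelocity ≤ 0) :
    |z.transverseRatioRate|
      ≤ 3 / 2 * (-(z.xi ^ 2 + 1) * z.radialVelocity) / z.xi ^ 3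
        + √z.casimir / (z.xi * √z.xi) := by
  have hxi := hz.xi_pos
  have hradial : |z.radialVelocity * (z.transverseVelocity - 3 * z.m2)|
      ≤ -z.radialVelocity * (6 * z.xi) := by
    have hfactor : |z.transverseVelocity - 3 * z.m2| ≤ 6 * z.xi := by
      linarith [hz.abs_transverseVelocity_sub_le, hz.sqrt_xi_le_xi]
    rw [abs_mul, abs_of_nonpos hu]
    exact mul_le_mul_of_nonneg_left hfactor (neg_nonneg.2 hu)
  have hangular : |z.m1 * (z.transverseVelocity + z.m2)| ≤ √z.casimir * (4 * √z.xi) := by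
    rw [abs_mul]
    exact mul_le_mul z.abs_m1_le_sqrt_casimir hz.abs_transverseVelocity_add_le (abs_nonneg _)
      (Real.sqrt_nonneg _)
  calc |z.transverseRatioRate|
      ≤ (-z.radialVelocity * (6 * z.xi) + √z.casimir * (4 * √z.xi)) / (4 * z.xi ^ 2) := by
        rw [transverseRatioRate, abs_div, abs_of_pos (by positivity : 0 < 4 * z.xi ^ 2)]
        gcongr
        exact (abs_add_le _ _).trans (add_le_add hradial hangular)
    _ = 3 / 2 * (-z.radialVelocity * z.xi ^ 2) / z.xi ^ 3 + √z.casimir / (z.xi * √z.xi) := by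
        field_simp
        linear_combination 8 * √z.casimir * Real.sq_sqrt hxi.le
    _ ≤ _ := by
        gcongr 3 / 2 * ?_ / _ + _
        linarith

end IsNearCollision

theorem tendsto_transverseVelocity_div_xi {ι : Type*} {l : Filter ι} {γ : ι → ReducedState}
    (hnear : ∀ᶠ t in l, (γ t).IsNearCollision) (hcoll : Tendsto (fun s ↦ (γ s).xi) l atTop) :
    Tendsto (fun s ↦ (γ s).transverseVelocity / (γ s).xi) l (𝓝 0) := by
  refine squeeze_zero_norm' ?_ ((Real.tendsto_sqrt_atTop.comp hcoll).const_div_atTop 3)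
  filter_upwards [hnear] with t ht
  have hxi := ht.xi_pos
  calc ‖(γ t).transverseVelocity / (γ t).xi‖ = |(γ t).transverseVelocity| / (γ t).xi := by
        rw [Real.norm_eq_abs, abs_div, abs_of_pos hxi]
    _ ≤ 3 * √(γ t).xi / (γ t).xi := by gcongr; exact ht.abs_transverseVelocity_le
    _ = 3 / √(γ t).xi := by rw [mul_div_assoc, Real.sqrt_div_self', mul_one_div]

end ReducedState

open ReducedState

/-- The equations of motion of the reduced two-body system along `γ`, at every time in `I`. -/
structure IsReducedSolutionOn (γ : ℝ → ReducedState) (I : Set ℝ) : Prop where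
  hasDerivAt_m1 : ∀ t ∈ I, HasDerivAt (fun s ↦ (γ s).m1)
    ((γ t).xi * (-(γ t).m2 ^ 2 + (γ t).m3 ^ 2 + 2 * (γ t).m2 * (γ t).m3 * (γ t).xi)) t
  hasDerivAt_m2 : ∀ t ∈ I, HasDerivAt (fun s ↦ (γ s).m2)
    ((γ t).m1 * (γ t).m2 * (γ t).xi - (γ t).m3 * (γ t).p
      - 2 * (γ t).m1 * (γ t).m3 * (γ t).xi ^ 2) t
  hasDerivAt_m3 : ∀ t ∈ I, HasDerivAt (fun s ↦ (γ s).m3)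
    ((γ t).m2 * (γ t).p - (γ t).m1 * (γ t).m3 * (γ t).xi) t
  hasDerivAt_xi : ∀ t ∈ I, HasDerivAt (fun s ↦ (γ s).xi)
    (-((γ t).xi ^ 2 + 1) * (γ t).radialVelocity) t
  hasDerivAt_p : ∀ t ∈ I, HasDerivAt (fun s ↦ (γ s).p)
    (-((γ t).xi ^ 2 + 1) * (1 + (γ t).m2 * (γ t).m3 - 2 * (γ t).m3 ^ 2 * (γ t).xi)) t

namespace IsReducedSolutionOn

variable {γ : ℝ → ReducedState} {I J : Set ℝ} {a b t : ℝ}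

theorem mono (hγ : IsReducedSolutionOn γ I) (hJ : J ⊆ I) : IsReducedSolutionOn γ J where
  hasDerivAt_m1 t ht := hγ.hasDerivAt_m1 t (hJ ht)
  hasDerivAt_m2 t ht := hγ.hasDerivAt_m2 t (hJ ht)
  hasDerivAt_m3 t ht := hγ.hasDerivAt_m3 t (hJ ht)
  hasDerivAt_xi t ht := hγ.hasDerivAt_xi t (hJ ht)
  hasDerivAt_p t ht := hγ.hasDerivAt_p t (hJ ht)

theorem hasDerivAt_casimir (hγ : IsReducedSolutionOn γ I) (ht : t ∈ I) :
    HasDerivAt (fun s ↦ (γ s).casimir) 0 t := by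
  refine ((((hγ.hasDerivAt_m1 t ht).pow 2).add ((hγ.hasDerivAt_m2 t ht).pow 2)).add
    ((hγ.hasDerivAt_m3 t ht).pow 2)).congr_deriv ?_
  simp only [Nat.cast_ofNat, Nat.add_one_sub_one, pow_one]
  ring

theorem hasDerivAt_energy (hγ : IsReducedSolutionOn γ I) (ht : t ∈ I) :
    HasDerivAt (fun s ↦ (γ s).energy) 0 t := by
  have hm1 := hγ.hasDerivAt_m1 t ht
  have hm2 := hγ.hasDerivAt_m2 t ht
  have hm3 := hγ.hasDerivAt_m3 t ht
  have hxi := hγ.hasDerivAt_xi t ht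
  have hp := hγ.hasDerivAt_p t ht
  refine (((((hp.pow 2).sub (hm1.mul hp)).sub hxi).sub ((hm2.mul hm3).mul hxi)).add
    ((hm3.pow 2).mul (hxi.pow 2))).congr_deriv ?_
  simp only [radialVelocity, Pi.mul_apply, Pi.pow_apply, Nat.cast_ofNat, Nat.add_one_sub_one,
    pow_one]
  ring

theorem casimir_eq (hγ : IsReducedSolutionOn γ I) (hI : I.OrdConnected) (ha : a ∈ I) (hb : b ∈ I) :
    (γ a).casimir = (γ b).casimir :=
  eq_of_forall_hasDerivAt_zero hI (fun _ ht ↦ hγ.hasDerivAt_casimir ht) ha hb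

theorem energy_eq (hγ : IsReducedSolutionOn γ I) (hI : I.OrdConnected) (ha : a ∈ I) (hb : b ∈ I) :
    (γ a).energy = (γ b).energy :=
  eq_of_forall_hasDerivAt_zero hI (fun _ ht ↦ hγ.hasDerivAt_energy ht) ha hb

theorem hasDerivAt_inv_sq_xi (hγ : IsReducedSolutionOn γ I) (ht : t ∈ I) (hxi : (γ t).xi ≠ 0) :
    HasDerivAt (fun s ↦ ((γ s).xi ^ 2)⁻¹)
      (2 * ((γ t).xi ^ 2 + 1) * (γ t).radialVelocity / (γ t).xi ^ 3) t := by
  refine (((hγ.hasDerivAt_xi t ht).pow 2).inv (pow_ne_zero 2 hxi)).congr_deriv ?_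
  simp only [Pi.pow_apply]
  field_simp
  ring

theorem hasDerivAt_radialVelocity (hγ : IsReducedSolutionOn γ I) (ht : t ∈ I) (hxi : (γ t).xi ≠ 0) :
    HasDerivAt (fun s ↦ (γ s).radialVelocity) (γ t).radialAcceleration t := by
  refine (((hγ.hasDerivAt_p t ht).const_mul 2).sub (hγ.hasDerivAt_m1 t ht)).congr_deriv ?_
  rw [radialAcceleration, transverseVelocity]
  field_simp
  ring

theorem hasDerivAt_transverseVelocity_div_xi (hγ : IsReducedSolutionOn γ I) (ht : t ∈ I)
    (hxi : (γ t).xi ≠ 0) :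
    HasDerivAt (fun s ↦ (γ s).transverseVelocity / (γ s).xi) (γ t).transverseRatioRate t := by
  refine (((((hγ.hasDerivAt_m3 t ht).const_mul 2).mul (hγ.hasDerivAt_xi t ht)).sub
    (hγ.hasDerivAt_m2 t ht)).div (hγ.hasDerivAt_xi t ht) hxi).congr_deriv ?_
  simp only [transverseRatioRate, radialVelocity, transverseVelocity, Pi.mul_apply, Pi.sub_apply]
  field_simp
  ring

theorem eventually_isNearCollision (hγ : IsReducedSolutionOn γ (Ico a b)) (hab : a < b)
    (hcoll : Tendsto (fun s ↦ (γ s).xi) (𝓝[<] b) atTop) :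
    ∀ᶠ t in 𝓝[<] b, (γ t).IsNearCollision := by
  have ha : a ∈ Ico a b := left_mem_Ico.2 hab
  filter_upwards [hcoll.eventually_ge_atTop 2, Ico_mem_nhdsLT hab,
    hcoll.eventually_ge_atTop (4 * |(γ a).energy| + (γ a).casimir)] with t h2 ht hle
  refine ⟨h2, ?_⟩
  rwa [hγ.energy_eq ordConnected_Ico ht ha, hγ.casimir_eq ordConnected_Ico ht ha]

end IsReducedSolutionOn

/-- The final part, on `[a, b)`, of a solution with a collision at time `b`, during which `ξ` stays
large compared with the first integrals. -/
structure IsCollisionTail (γ : ℝ → ReducedState) (a b : ℝ) : Prop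
    extends IsReducedSolutionOn γ (Ico a b) where
  isNearCollision : ∀ t ∈ Ico a b, (γ t).IsNearCollision
  tendsto_xi : Tendsto (fun s ↦ (γ s).xi) (𝓝[<] b) atTop

theorem IsReducedSolutionOn.exists_isCollisionTail {γ : ℝ → ReducedState} {a b : ℝ}
    (hγ : IsReducedSolutionOn γ (Ico a b)) (hab : a < b)
    (hcoll : Tendsto (fun s ↦ (γ s).xi) (𝓝[<] b) atTop) :
    ∃ c ∈ Ico a b, IsCollisionTail γ c b := by
  obtain ⟨c, hc : c < b, hsub⟩ := mem_nhdsLT_iff_exists_Ico_subset.1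
    ((hγ.eventually_isNearCollision hab hcoll).and (Ico_mem_nhdsLT hab))
  exact ⟨c, (hsub (left_mem_Ico.2 hc)).2, hγ.mono fun t ht ↦ (hsub ht).2,
    fun t ht ↦ (hsub ht).1, hcoll⟩

namespace IsCollisionTail

variable {γ : ℝ → ReducedState} {a b t : ℝ}

theorem mono_left (hγ : IsCollisionTail γ a b) (hat : a ≤ t) : IsCollisionTail γ t b where
  toIsReducedSolutionOn := hγ.mono (Ico_subset_Ico_left hat)
  isNearCollision s hs := hγ.isNearCollision s (Ico_subset_Ico_left hat hs)
  tendsto_xi := hγ.tendsto_xi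

theorem radialVelocity_nonpos (hγ : IsCollisionTail γ a b) (ht : t ∈ Ico a b) :
    (γ t).radialVelocity ≤ 0 := by
  by_contra! hpos
  have hsub : Ico t b ⊆ Ico a b := Ico_subset_Ico_left ht.1
  have hnear := fun s hs ↦ hγ.isNearCollision s (hsub hs)
  have hnonneg : ∀ s ∈ Ico t b, 0 ≤ (γ s).radialVelocity :=
    nonneg_of_hasDerivAt_pos_of_eq_zero
      (fun s hs ↦ hγ.hasDerivAt_radialVelocity (hsub hs) (hnear s hs).xi_pos.ne')
      (fun s hs ↦ (hnear s hs).radialAcceleration_pos_of_radialVelocity_eq_zero) hpos.le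
  have hderiv := (hγ.mono hsub).hasDerivAt_xi
  have hanti : AntitoneOn (fun s ↦ (γ s).xi) (Ico t b) :=
    antitoneOn_of_hasDerivWithinAt_nonpos (convex_Ico t b)
      (fun s hs ↦ (hderiv s hs).continuousAt.continuousWithinAt)
      (fun s hs ↦ (hderiv s (interior_subset hs)).hasDerivWithinAt)
      (fun s hs ↦ mul_nonpos_of_nonpos_of_nonneg (neg_nonpos.2 (by positivity))
        (hnonneg s (interior_subset hs)))
  obtain ⟨s, hlt, hs⟩ :=
    ((hγ.tendsto_xi.eventually_gt_atTop (γ t).xi).and (Ico_mem_nhdsLT ht.2)).exists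
  exact (hanti (left_mem_Ico.2 ht.2) hs hs.1).not_gt hlt

theorem monotoneOn_xi (hγ : IsCollisionTail γ a b) : MonotoneOn (fun s ↦ (γ s).xi) (Ico a b) :=
  monotoneOn_of_hasDerivWithinAt_nonneg (convex_Ico a b)
    (fun t ht ↦ (hγ.hasDerivAt_xi t ht).continuousAt.continuousWithinAt)
    (fun t ht ↦ (hγ.hasDerivAt_xi t (interior_subset ht)).hasDerivWithinAt)
    (fun _ ht ↦ mul_nonneg_of_nonpos_of_nonpos (neg_nonpos.2 (by positivity))
      (hγ.radialVelocity_nonpos (interior_subset ht)))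

theorem sqrt_casimir_div_xi_mul_sqrt_xi_le_left (hγ : IsCollisionTail γ a b) (ht : t ∈ Ico a b) :
    √(γ t).casimir / ((γ t).xi * √(γ t).xi) ≤ √(γ a).casimir / ((γ a).xi * √(γ a).xi) := by
  have ha : a ∈ Ico a b := left_mem_Ico.2 (ht.1.trans_lt ht.2)
  have hle : (γ a).xi ≤ (γ t).xi := hγ.monotoneOn_xi ha ht ht.1
  have hxi_a := (hγ.isNearCollision a ha).xi_pos
  have hxi_t := (hγ.isNearCollision t ht).xi_pos
  rw [hγ.casimir_eq ordConnected_Ico ht ha]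
  gcongr

theorem abs_transverseVelocity_div_xi_le (hγ : IsCollisionTail γ a b) (hab : a < b) :
    |(γ a).transverseVelocity / (γ a).xi|
      ≤ 3 / 4 * ((γ a).xi ^ 2)⁻¹ + √(γ a).casimir / ((γ a).xi * √(γ a).xi) * (b - a) := by
  set k := √(γ a).casimir / ((γ a).xi * √(γ a).xi)
  have hmajorant : ∀ t ∈ Ico a b, HasDerivAt (fun s ↦ k * s - 3 / 4 * ((γ s).xi ^ 2)⁻¹)
      (3 / 2 * (-((γ t).xi ^ 2 + 1) * (γ t).radialVelocity) / (γ t).xi ^ 3 + k) t := by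
    intro t ht
    refine (((hasDerivAt_id t).const_mul k).sub ((hγ.hasDerivAt_inv_sq_xi ht
      (hγ.isNearCollision t ht).xi_pos.ne').const_mul (3 / 4))).congr_deriv ?_
    ring
  have hderiv_le : ∀ t ∈ Ico a b,
      |(γ t).transverseRatioRate|
        ≤ 3 / 2 * (-((γ t).xi ^ 2 + 1) * (γ t).radialVelocity) / (γ t).xi ^ 3 + k :=
    fun t ht ↦ ((hγ.isNearCollision t ht).abs_transverseRatioRate_le
      (hγ.radialVelocity_nonpos ht)).trans
      (add_le_add_right (hγ.sqrt_casimir_div_xi_mul_sqrt_xi_le_left ht) _)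
  have hlim : Tendsto (fun s ↦ k * s - 3 / 4 * ((γ s).xi ^ 2)⁻¹) (𝓝[<] b)
      (𝓝 (k * b - 3 / 4 * 0)) :=
    ((tendsto_nhdsWithin_of_tendsto_nhds tendsto_id).const_mul k).sub
      (((tendsto_pow_atTop two_ne_zero).comp hγ.tendsto_xi).inv_tendsto_atTop.const_mul (3 / 4))
  have hratio_lim := tendsto_transverseVelocity_div_xi
    (mem_of_superset (Ico_mem_nhdsLT hab) hγ.isNearCollision) hγ.tendsto_xi
  have hmain := norm_sub_le_of_tendsto_of_norm_deriv_le hab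
    (fun t ht ↦ hγ.hasDerivAt_transverseVelocity_div_xi ht (hγ.isNearCollision t ht).xi_pos.ne')
    hmajorant hderiv_le hratio_lim hlim
  rw [zero_sub, norm_neg, Real.norm_eq_abs] at hmain
  linarith

theorem abs_transverseVelocity_mul_sqrt_xi_le (hγ : IsCollisionTail γ a b) (hab : a < b) :
    |(γ a).transverseVelocity| * √(γ a).xi ≤ 1 + √(γ a).casimir * (b - a) := by
  have ha := hγ.isNearCollision a (left_mem_Ico.2 hab)
  have hxi := ha.xi_pos
  calc |(γ a).transverseVelocity| * √(γ a).xi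
      = |(γ a).transverseVelocity / (γ a).xi| * ((γ a).xi * √(γ a).xi) := by
        rw [abs_div, abs_of_pos hxi]
        field_simp
    _ ≤ (3 / 4 * ((γ a).xi ^ 2)⁻¹ + √(γ a).casimir / ((γ a).xi * √(γ a).xi) * (b - a))
          * ((γ a).xi * √(γ a).xi) := by
        gcongr
        exact hγ.abs_transverseVelocity_div_xi_le hab
    _ = 3 / 4 * (√(γ a).xi / (γ a).xi) + √(γ a).casimir * (b - a) := by field_simp
    _ ≤ 1 + √(γ a).casimir * (b - a) := by
        gcongr
        linarith [div_le_one_of_le₀ ha.sqrt_xi_le_xi hxi.le]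

end IsCollisionTail

/-- Along a collision solution with `t* < ∞` and `ξ(t) → +∞` as `t → t*⁻`, the
quantity `2m₃ξ − m₂` decays at least like `ξ^(−1/2)`: there are `M > 0` and
`t₁ ∈ [t₀, t*)` with `|2m₃(t)ξ(t) − m₂(t)|·√(ξ(t)) ≤ M` on `[t₁, t*)`. -/
theorem two_m3_xi_sub_m2_estimate
    (t0 tstar : ℝ) (ht0 : t0 < tstar)
    (m1 m2 m3 xi p : ℝ → ℝ)
    (hm1 : ∀ t ∈ Set.Ico t0 tstar,
      HasDerivAt m1 (xi t * (-(m2 t)^2 + (m3 t)^2 + 2 * m2 t * m3 t * xi t)) t)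
    (hm2 : ∀ t ∈ Set.Ico t0 tstar,
      HasDerivAt m2 (m1 t * m2 t * xi t - m3 t * p t - 2 * m1 t * m3 t * (xi t)^2) t)
    (hm3 : ∀ t ∈ Set.Ico t0 tstar,
      HasDerivAt m3 (m2 t * p t - m1 t * m3 t * xi t) t)
    (hxi : ∀ t ∈ Set.Ico t0 tstar,
      HasDerivAt xi (-((xi t)^2 + 1) * (2 * p t - m1 t)) t)
    (hp : ∀ t ∈ Set.Ico t0 tstar,
      HasDerivAt p (-((xi t)^2 + 1) * (1 + m2 t * m3 t - 2 * (m3 t)^2 * xi t)) t)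
    (hcoll : Tendsto xi (nhdsWithin tstar (Set.Iio tstar)) atTop) :
    ∃ M > (0 : ℝ), ∃ t1 ∈ Set.Ico t0 tstar,
      ∀ t ∈ Set.Ico t1 tstar,
        |2 * m3 t * xi t - m2 t| * Real.sqrt (xi t) ≤ M := by
  let γ : ℝ → ReducedState := fun t ↦ ⟨m1 t, m2 t, m3 t, xi t, p t⟩
  have hγ : IsReducedSolutionOn γ (Ico t0 tstar) := ⟨hm1, hm2, hm3, hxi, hp⟩
  obtain ⟨t1, ht1, htail⟩ := hγ.exists_isCollisionTail ht0 hcoll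
  refine ⟨1 + √(γ t0).casimir * (tstar - t0), ?_, t1, ht1, fun t ht ↦ ?_⟩
  · have : 0 ≤ tstar - t0 := sub_nonneg.2 ht0.le
    positivity
  have ht' : t ∈ Ico t0 tstar := Ico_subset_Ico_left ht1.1 ht
  calc |2 * m3 t * xi t - m2 t| * √(xi t)
      ≤ 1 + √(γ t).casimir * (tstar - t) :=
        (htail.mono_left ht.1).abs_transverseVelocity_mul_sqrt_xi_le ht.2
    _ = 1 + √(γ t0).casimir * (tstar - t) := by
        rw [hγ.casimir_eq ordConnected_Ico ht' (left_mem_Ico.2 ht0)]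
    _ ≤ 1 + √(γ t0).casimir * (tstar - t0) := by
        gcongr
        exact ht'.1
end

section
/- Let (m₁,m₂,m₃,ξ,p) be a collision solution of the reduced two-body system on [t₀, t*) with t* < ∞ and ξ(t) → +∞ as t → t*⁻. Then the projection of the solution curve onto the Casimir sphere {m₁² + m₂² + m₃² = C} has finite length: the integral ∫_{t₀}^{t*} √(m₁'(t)² + m₂'(t)² + m₃'(t)²) dt is finite. -/
open Filter Set

/-!
Put `u = p - m₁ / 2` and `w = m₃ ξ - m₂ / 2`. Conservation of the Casimir and of the energy gives
`u² + w² = ξ + O(1)`, and the system takes the form `ξ' = -2 u (ξ² + 1)`, `m' = O(ξ (1 + |w|))`;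
so it suffices that `w` stays bounded and that `ξ` is integrable up to the collision.

The quotient `w / ξ` tends to `0` and its derivative is `O(1 / ξ)`. Integrating backwards from the
collision, `w` is bounded at every time `s` at which `ξ` is minimal over `[s, t*)`. There
`u² ≈ ξ ≠ 0`, so `s` is not a critical point of `ξ`. Hence near the collision `ξ` has no interior
minimum, i.e. it is increasing, every time is such an `s`, and `w` is bounded. It follows that
`-u ≥ √ξ / 2`, so `ξ' ≥ ξ ^ (5 / 2)` and `ξ ≤ (-2 / √ξ)'` is integrable.
-/

section Calculus

open MeasureTheory Asymptotics
open scoped Topology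

theorem eqOn_const_of_hasDerivAt_zero {E : Type*} [NormedAddCommGroup E] [NormedSpace ℝ E]
    {f : ℝ → E} {s : Set ℝ} {x : ℝ} (hs : Convex ℝ s) (hf : ∀ t ∈ s, HasDerivAt f 0 t)
    (hx : x ∈ s) : EqOn f (fun _ => f x) s := by
  intro y hy
  have hle := hs.norm_image_sub_le_of_norm_hasDerivWithin_le (C := 0)
    (fun t ht => (hf t ht).hasDerivWithinAt) (fun t _ => norm_zero.le) hx hy
  rw [zero_mul, norm_le_zero_iff] at hle
  exact sub_eq_zero.1 hle

theorem exists_isMinOn_Ico_of_tendsto_atTop {α β : Type*} [ConditionallyCompleteLinearOrder α]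
    [TopologicalSpace α] [OrderTopology α] [LinearOrder β] [TopologicalSpace β]
    [ClosedIicTopology β] {f : α → β} {a b : α} (hab : a < b) (hf : ContinuousOn f (Ico a b))
    (hlim : Tendsto f (𝓝[<] b) atTop) : ∃ s ∈ Ico a b, IsMinOn f (Ico a b) s := by
  obtain ⟨c, ⟨hac, hcb⟩, hc⟩ := (mem_nhdsLT_iff_exists_mem_Ico_Ioo_subset hab).1
    (hlim.eventually_ge_atTop (f a))
  obtain ⟨s, hs, hmin⟩ := isCompact_Icc.exists_isMinOn ⟨a, left_mem_Icc.2 hac⟩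
    (hf.mono (Icc_subset_Ico_right hcb))
  refine ⟨s, ⟨hs.1, hs.2.trans_lt hcb⟩, fun r hr => ?_⟩
  rcases le_or_gt r c with hrc | hcr
  · exact hmin ⟨hr.1, hrc⟩
  · exact (hmin (left_mem_Icc.2 hac)).trans (hc ⟨hcr, hr.2⟩)

theorem norm_sub_le_of_tendsto_of_norm_hasDerivAt_le {E : Type*} [NormedAddCommGroup E]
    [NormedSpace ℝ E] {f f' : ℝ → E} {a b K : ℝ} {l : E} (hab : a < b)
    (hf : ∀ t ∈ Ico a b, HasDerivAt f (f' t) t) (hbound : ∀ t ∈ Ico a b, ‖f' t‖ ≤ K)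
    (hlim : Tendsto f (𝓝[<] b) (𝓝 l)) : ‖l - f a‖ ≤ K * (b - a) := by
  have hdist : Tendsto (fun t => K * (t - a)) (𝓝[<] b) (𝓝 (K * (b - a))) :=
    ((continuous_id.sub continuous_const).const_mul K).continuousWithinAt
  refine le_of_tendsto_of_tendsto (hlim.sub_const (f a)).norm hdist ?_
  filter_upwards [Ioo_mem_nhdsLT hab] with t ht
  have hle := (convex_Ico a b).norm_image_sub_le_of_norm_hasDerivWithin_le
    (fun x hx => (hf x hx).hasDerivWithinAt) hbound (left_mem_Ico.2 hab) (Ioo_subset_Ico_self ht)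
  rwa [Real.norm_of_nonneg (sub_nonneg.2 ht.1.le)] at hle

theorem integrableOn_Ico_of_integrableAtFilter_nhdsLT {X E : Type*} [LinearOrder X]
    [TopologicalSpace X] [OrderTopology X] [CompactIccSpace X] [MeasurableSpace X]
    [NormedAddCommGroup E] {f : X → E} {a b : X} {μ : Measure X}
    (hf : LocallyIntegrableOn f (Ico a b) μ) (hb : IntegrableAtFilter f (𝓝[<] b) μ) :
    IntegrableOn f (Ico a b) μ := by
  rcases le_or_gt b a with hba | hab
  · simp only [Ico_eq_empty hba.not_gt, integrableOn_empty]
  obtain ⟨s, hs, hint⟩ := hb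
  obtain ⟨c, ⟨-, hcb⟩, hc⟩ := (mem_nhdsLT_iff_exists_mem_Ico_Ioo_subset hab).1 hs
  have hleft : IntegrableOn f (Icc a c) μ :=
    hf.integrableOn_compact_subset (Icc_subset_Ico_right hcb) isCompact_Icc
  refine (hleft.union (hint.mono_set hc)).mono_set fun t ht => ?_
  exact (le_or_gt t c).imp (fun htc => ⟨ht.1, htc⟩) fun hct => ⟨hct, ht.2⟩

theorem integrableOn_Ioo_deriv_of_nonneg_of_tendsto {g g' : ℝ → ℝ} {a b l : ℝ}
    (hg : ∀ t ∈ Ico a b, HasDerivAt g (g' t) t) (hg' : ∀ t ∈ Ioo a b, 0 ≤ g' t)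
    (hlim : Tendsto g (𝓝[<] b) (𝓝 l)) : IntegrableOn g' (Ioo a b) := by
  have hcont : ContinuousOn (Function.update g b l) (Icc a b) := by
    rw [continuousOn_update_iff, Icc_sdiff_right]
    exact ⟨fun t ht => (hg t ht).continuousAt.continuousWithinAt,
      fun _ => hlim.mono_left (nhdsWithin_mono b Ico_subset_Iio_self)⟩
  have hderiv : ∀ t ∈ Ioo a b, HasDerivAt (Function.update g b l) (g' t) t := fun t ht =>
    (hg t (Ioo_subset_Ico_self ht)).congr_of_eventuallyEq <|
      (eventually_ne_nhds ht.2.ne).mono fun _ hne => Function.update_of_ne hne l g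
  exact (intervalIntegral.integrableOn_deriv_of_nonneg hcont hderiv hg').mono_set
    Ioo_subset_Ioc_self

theorem integrableOn_Ioo_of_sq_mul_sqrt_le_deriv {f f' : ℝ → ℝ} {a b : ℝ}
    (hf : ∀ t ∈ Ico a b, HasDerivAt f (f' t) t) (hpos : ∀ t ∈ Ico a b, 0 < f t)
    (hf' : ∀ t ∈ Ioo a b, f t ^ 2 * √(f t) ≤ f' t) (hlim : Tendsto f (𝓝[<] b) atTop) :
    IntegrableOn f (Ioo a b) := by
  have hderiv : ∀ t ∈ Ico a b,
      HasDerivAt (fun t => -2 / √(f t)) (f' t / (f t * √(f t))) t := by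
    intro t ht
    have hsqrt := Real.sqrt_pos.2 (hpos t ht)
    refine (((hasDerivAt_const t (-2 : ℝ)).div ((hf t ht).sqrt (hpos t ht).ne')
      hsqrt.ne').congr_deriv ?_)
    rw [Real.sq_sqrt (hpos t ht).le]
    field_simp
    ring
  have hle : ∀ t ∈ Ioo a b, f t ≤ f' t / (f t * √(f t)) := by
    intro t ht
    have hft := hpos t (Ioo_subset_Ico_self ht)
    rw [le_div_iff₀ (mul_pos hft (Real.sqrt_pos.2 hft))]
    linarith [hf' t ht]
  have hmajorant := integrableOn_Ioo_deriv_of_nonneg_of_tendsto hderiv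
    (fun t ht => (hpos t (Ioo_subset_Ico_self ht)).le.trans (hle t ht))
    ((Real.tendsto_sqrt_atTop.comp hlim).const_div_atTop (-2))
  have hcont : ContinuousOn f (Ioo a b) := fun t ht =>
    (hf t (Ioo_subset_Ico_self ht)).continuousAt.continuousWithinAt
  refine Integrable.mono' hmajorant (hcont.aestronglyMeasurable measurableSet_Ioo) ?_
  refine (ae_restrict_mem measurableSet_Ioo).mono fun t ht => ?_
  rw [Real.norm_of_nonneg (hpos t (Ioo_subset_Ico_self ht)).le]
  exact hle t ht

theorem isBigO_mul_of_isBigO_one {α R 𝕜 : Type*} [SeminormedRing R] [NormedDivisionRing 𝕜]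
    {l : Filter α} {f g : α → R} {h : α → 𝕜} (hf : f =O[l] (fun _ => (1 : 𝕜)))
    (hg : g =O[l] h) : (fun t => f t * g t) =O[l] h := by
  simpa only [one_mul] using hf.mul hg

end Calculus

/-- A curve in the reduced phase space of the two-body problem on the sphere: the angular
momentum `(m₁, m₂, m₃)`, the variable `ξ = cot q` for the distance `q` of the bodies, and the
momentum `p` conjugate to `q`. -/
structure ReducedCurve where
  (m₁ m₂ m₃ ξ p : ℝ → ℝ)

namespace ReducedCurve

open MeasureTheory Asymptotics
open scoped Topology

/-- The equations of motion of two equal unit masses with potential `-cot q`, required at each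
time in `s`. -/
structure IsSolutionOn (γ : ReducedCurve) (s : Set ℝ) : Prop where
  hasDerivAt_m₁ : ∀ t ∈ s, HasDerivAt γ.m₁
    (γ.ξ t * (-(γ.m₂ t) ^ 2 + (γ.m₃ t) ^ 2 + 2 * γ.m₂ t * γ.m₃ t * γ.ξ t)) t
  hasDerivAt_m₂ : ∀ t ∈ s, HasDerivAt γ.m₂
    (γ.m₁ t * γ.m₂ t * γ.ξ t - γ.m₃ t * γ.p t - 2 * γ.m₁ t * γ.m₃ t * (γ.ξ t) ^ 2) t
  hasDerivAt_m₃ : ∀ t ∈ s, HasDerivAt γ.m₃ (γ.m₂ t * γ.p t - γ.m₁ t * γ.m₃ t * γ.ξ t) t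
  hasDerivAt_ξ : ∀ t ∈ s, HasDerivAt γ.ξ (-((γ.ξ t) ^ 2 + 1) * (2 * γ.p t - γ.m₁ t)) t
  hasDerivAt_p : ∀ t ∈ s, HasDerivAt γ.p
    (-((γ.ξ t) ^ 2 + 1) * (1 + γ.m₂ t * γ.m₃ t - 2 * (γ.m₃ t) ^ 2 * γ.ξ t)) t

/-- The squared radius of the sphere on which `(m₁, m₂, m₃)` moves. -/
def casimir (γ : ReducedCurve) (t : ℝ) : ℝ := γ.m₁ t ^ 2 + γ.m₂ t ^ 2 + γ.m₃ t ^ 2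

/-- The Hamiltonian of the reduced system, up to a function of the Casimir. -/
def energy (γ : ReducedCurve) (t : ℝ) : ℝ :=
  γ.p t ^ 2 - γ.m₁ t * γ.p t - γ.ξ t - γ.m₂ t * γ.m₃ t * γ.ξ t + (γ.m₃ t * γ.ξ t) ^ 2

/-- The momentum `u = p - m₁ / 2` along the line joining the bodies: `q' = 2 u`. -/
noncomputable def radialMomentum (γ : ReducedCurve) (t : ℝ) : ℝ := γ.p t - γ.m₁ t / 2

/-- The momentum `w = m₃ ξ - m₂ / 2` transverse to the line joining the bodies; it completes
the square in the energy. -/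
noncomputable def transverseMomentum (γ : ReducedCurve) (t : ℝ) : ℝ := γ.m₃ t * γ.ξ t - γ.m₂ t / 2

/-- The quotient `w / ξ = w tan q`, which near a collision plays the role of the relative angular
momentum of the planar Kepler problem. -/
noncomputable def relativeAngularMomentum (γ : ReducedCurve) (t : ℝ) : ℝ :=
  γ.transverseMomentum t / γ.ξ t

/-- The Euclidean speed of the projection of the curve to the `(m₁, m₂, m₃)`-space. -/
noncomputable def sphereSpeed (γ : ReducedCurve) (t : ℝ) : ℝ :=
  √((deriv γ.m₁ t) ^ 2 + (deriv γ.m₂ t) ^ 2 + (deriv γ.m₃ t) ^ 2)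

variable {γ : ReducedCurve} {s : Set ℝ} {a b t : ℝ}

theorem sq_radialMomentum_add_sq_transverseMomentum (γ : ReducedCurve) (t : ℝ) :
    γ.radialMomentum t ^ 2 + γ.transverseMomentum t ^ 2
      = γ.energy t + γ.ξ t + (γ.m₁ t ^ 2 + γ.m₂ t ^ 2) / 4 := by
  simp only [radialMomentum, transverseMomentum, energy]
  ring

namespace IsSolutionOn

theorem mono {s' : Set ℝ} (hγ : γ.IsSolutionOn s) (hs : s' ⊆ s) : γ.IsSolutionOn s' where
  hasDerivAt_m₁ t ht := hγ.hasDerivAt_m₁ t (hs ht)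
  hasDerivAt_m₂ t ht := hγ.hasDerivAt_m₂ t (hs ht)
  hasDerivAt_m₃ t ht := hγ.hasDerivAt_m₃ t (hs ht)
  hasDerivAt_ξ t ht := hγ.hasDerivAt_ξ t (hs ht)
  hasDerivAt_p t ht := hγ.hasDerivAt_p t (hs ht)

theorem hasDerivAt_casimir (hγ : γ.IsSolutionOn s) (ht : t ∈ s) : HasDerivAt γ.casimir 0 t := by
  refine ((((hγ.hasDerivAt_m₁ t ht).pow 2).add ((hγ.hasDerivAt_m₂ t ht).pow 2)).add
    ((hγ.hasDerivAt_m₃ t ht).pow 2)).congr_deriv ?_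
  ring

theorem hasDerivAt_energy (hγ : γ.IsSolutionOn s) (ht : t ∈ s) : HasDerivAt γ.energy 0 t := by
  have hm₁ := hγ.hasDerivAt_m₁ t ht
  have hm₂ := hγ.hasDerivAt_m₂ t ht
  have hm₃ := hγ.hasDerivAt_m₃ t ht
  have hξ := hγ.hasDerivAt_ξ t ht
  have hp := hγ.hasDerivAt_p t ht
  refine (((((hp.pow 2).sub (hm₁.mul hp)).sub hξ).sub ((hm₂.mul hm₃).mul hξ)).add
    ((hm₃.mul hξ).pow 2)).congr_deriv ?_
  simp only [Pi.mul_apply]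
  ring

theorem hasDerivAt_ξ_radialMomentum (hγ : γ.IsSolutionOn s) (ht : t ∈ s) :
    HasDerivAt γ.ξ (-2 * γ.radialMomentum t * (γ.ξ t ^ 2 + 1)) t :=
  (hγ.hasDerivAt_ξ t ht).congr_deriv (by simp only [radialMomentum]; ring)

theorem hasDerivAt_relativeAngularMomentum (hγ : γ.IsSolutionOn s) (ht : t ∈ s)
    (hξ₀ : γ.ξ t ≠ 0) :
    HasDerivAt γ.relativeAngularMomentum
      ((2 * γ.transverseMomentum t * γ.radialMomentum t
        + (γ.transverseMomentum t + γ.m₂ t / 2) * (γ.m₁ t / 4 - 3 * γ.radialMomentum t / 2))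
          / γ.ξ t ^ 2) t := by
  have hξ := hγ.hasDerivAt_ξ t ht
  refine ((((hγ.hasDerivAt_m₃ t ht).mul hξ).sub
    ((hγ.hasDerivAt_m₂ t ht).div_const 2)).div hξ hξ₀).congr_deriv ?_
  simp only [radialMomentum, transverseMomentum, Pi.mul_apply, Pi.sub_apply]
  field_simp
  ring

theorem deriv_m₁ (hγ : γ.IsSolutionOn s) (ht : t ∈ s) :
    deriv γ.m₁ t = (2 * (γ.m₂ t * γ.transverseMomentum t) + γ.m₃ t * γ.m₃ t) * γ.ξ t := by
  rw [(hγ.hasDerivAt_m₁ t ht).deriv, transverseMomentum]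
  ring

theorem deriv_m₂ (hγ : γ.IsSolutionOn s) (ht : t ∈ s) :
    deriv γ.m₂ t
      = -(γ.m₃ t * γ.p t) - 2 * (γ.m₁ t * γ.transverseMomentum t) * γ.ξ t := by
  rw [(hγ.hasDerivAt_m₂ t ht).deriv, transverseMomentum]
  ring

theorem continuousOn_sphereSpeed (hγ : γ.IsSolutionOn s) : ContinuousOn γ.sphereSpeed s := by
  have hm₁ : ContinuousOn γ.m₁ s := HasDerivAt.continuousOn hγ.hasDerivAt_m₁
  have hm₂ : ContinuousOn γ.m₂ s := HasDerivAt.continuousOn hγ.hasDerivAt_m₂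
  have hm₃ : ContinuousOn γ.m₃ s := HasDerivAt.continuousOn hγ.hasDerivAt_m₃
  have hξ : ContinuousOn γ.ξ s := HasDerivAt.continuousOn hγ.hasDerivAt_ξ
  have hp : ContinuousOn γ.p s := HasDerivAt.continuousOn hγ.hasDerivAt_p
  have hm₁' : ContinuousOn (deriv γ.m₁) s :=
    ContinuousOn.congr (by fun_prop) fun t ht => (hγ.hasDerivAt_m₁ t ht).deriv
  have hm₂' : ContinuousOn (deriv γ.m₂) s :=
    ContinuousOn.congr (by fun_prop) fun t ht => (hγ.hasDerivAt_m₂ t ht).deriv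
  have hm₃' : ContinuousOn (deriv γ.m₃) s :=
    ContinuousOn.congr (by fun_prop) fun t ht => (hγ.hasDerivAt_m₃ t ht).deriv
  unfold sphereSpeed
  fun_prop

end IsSolutionOn

/-- The curve is a solution on `[a, b)` colliding at time `b`, and the interval is so short that
`ξ` dominates the conserved quantities throughout. The constant `196 = 4 * 7 ^ 2` is
chosen so that a transverse momentum of size at most `7` is negligible in the energy. -/
structure IsCollisionTail (γ : ReducedCurve) (a b : ℝ) : Prop where
  lt : a < b
  isSolutionOn : γ.IsSolutionOn (Ico a b)
  tendsto_ξ : Tendsto γ.ξ (𝓝[<] b) atTop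
  sub_le_one : b - a ≤ 1
  le_ξ : ∀ t ∈ Ico a b, 196 ≤ γ.ξ t
  casimir_le : ∀ t ∈ Ico a b, γ.casimir t ≤ γ.ξ t
  abs_energy_le : ∀ t ∈ Ico a b, |γ.energy t| ≤ γ.ξ t / 4

theorem IsSolutionOn.exists_isCollisionTail (hγ : γ.IsSolutionOn (Ico a b)) (hab : a < b)
    (hlim : Tendsto γ.ξ (𝓝[<] b) atTop) : ∃ c, γ.IsCollisionTail c b := by
  have hnear : ∀ᶠ t in 𝓝[<] b, max a (b - 1) < t ∧
      196 + γ.casimir a + 4 * |γ.energy a| ≤ γ.ξ t :=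
    (eventually_nhdsWithin_of_eventually_nhds (lt_mem_nhds (max_lt hab (sub_one_lt b)))).and
      (hlim.eventually_ge_atTop _)
  obtain ⟨c, hcb, hc⟩ := mem_nhdsLT_iff_exists_Ico_subset.1 hnear
  have hmax : max a (b - 1) < c := (hc (left_mem_Ico.2 hcb)).1
  have hlarge : ∀ t ∈ Ico c b, 196 + γ.casimir a + 4 * |γ.energy a| ≤ γ.ξ t :=
    fun t ht => (hc ht).2
  have hsub : Ico c b ⊆ Ico a b := Ico_subset_Ico_left ((le_max_left a (b - 1)).trans hmax.le)
  have hcasimir₀ : 0 ≤ γ.casimir a := by rw [casimir]; positivity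
  have hcasimir : ∀ t ∈ Ico a b, γ.casimir t = γ.casimir a := eqOn_const_of_hasDerivAt_zero
    (convex_Ico a b) (fun _ => hγ.hasDerivAt_casimir) (left_mem_Ico.2 hab)
  have henergy : ∀ t ∈ Ico a b, γ.energy t = γ.energy a := eqOn_const_of_hasDerivAt_zero
    (convex_Ico a b) (fun _ => hγ.hasDerivAt_energy) (left_mem_Ico.2 hab)
  refine ⟨c, hcb, hγ.mono hsub, hlim, ?_, fun t ht => ?_, fun t ht => ?_, fun t ht => ?_⟩
  · linarith [le_max_right a (b - 1)]
  · linarith [hlarge t ht, abs_nonneg (γ.energy a)]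
  · linarith [hcasimir t (hsub ht), hlarge t ht, abs_nonneg (γ.energy a)]
  · rw [henergy t (hsub ht)]
    linarith [hlarge t ht]

namespace IsCollisionTail

theorem mono (hγ : γ.IsCollisionTail a b) (ht : t ∈ Ico a b) : γ.IsCollisionTail t b :=
  have hsub : Ico t b ⊆ Ico a b := Ico_subset_Ico_left ht.1
  { lt := ht.2
    isSolutionOn := hγ.isSolutionOn.mono hsub
    tendsto_ξ := hγ.tendsto_ξ
    sub_le_one := (sub_le_sub_left ht.1 b).trans hγ.sub_le_one
    le_ξ := fun r hr => hγ.le_ξ r (hsub hr)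
    casimir_le := fun r hr => hγ.casimir_le r (hsub hr)
    abs_energy_le := fun r hr => hγ.abs_energy_le r (hsub hr) }

theorem ξ_pos (hγ : γ.IsCollisionTail a b) (ht : t ∈ Ico a b) : 0 < γ.ξ t := by
  linarith [hγ.le_ξ t ht]

theorem continuousOn_ξ (hγ : γ.IsCollisionTail a b) : ContinuousOn γ.ξ (Ico a b) :=
  HasDerivAt.continuousOn hγ.isSolutionOn.hasDerivAt_ξ

theorem sq_add_sq_le (hγ : γ.IsCollisionTail a b) (ht : t ∈ Ico a b) :
    γ.radialMomentum t ^ 2 + γ.transverseMomentum t ^ 2 ≤ 2 * γ.ξ t := by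
  have hcasimir := hγ.casimir_le t ht
  rw [casimir] at hcasimir
  rw [sq_radialMomentum_add_sq_transverseMomentum]
  linarith [(abs_le.1 (hγ.abs_energy_le t ht)).2, hγ.ξ_pos ht, sq_nonneg (γ.m₃ t)]

theorem le_sq_add_sq (hγ : γ.IsCollisionTail a b) (ht : t ∈ Ico a b) :
    3 / 4 * γ.ξ t ≤ γ.radialMomentum t ^ 2 + γ.transverseMomentum t ^ 2 := by
  rw [sq_radialMomentum_add_sq_transverseMomentum]
  linarith [(abs_le.1 (hγ.abs_energy_le t ht)).1, sq_nonneg (γ.m₁ t), sq_nonneg (γ.m₂ t)]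

theorem abs_deriv_relativeAngularMomentum_le (hγ : γ.IsCollisionTail a b) (ht : t ∈ Ico a b) :
    |deriv γ.relativeAngularMomentum t| ≤ 7 / γ.ξ t := by
  have hξ := hγ.ξ_pos ht
  have hkinetic := hγ.sq_add_sq_le ht
  have hcasimir := hγ.casimir_le t ht
  rw [casimir] at hcasimir
  rw [(hγ.isSolutionOn.hasDerivAt_relativeAngularMomentum ht hξ.ne').deriv, abs_div,
    abs_of_pos (pow_pos hξ 2), div_le_div_iff₀ (pow_pos hξ 2) hξ]
  set u := γ.radialMomentum t
  set w := γ.transverseMomentum t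
  set x := γ.m₁ t / 4 - 3 * u / 2 with hx
  set y := w + γ.m₂ t / 2 with hy
  have hxsq : x ^ 2 ≤ γ.m₁ t ^ 2 / 8 + 9 * u ^ 2 / 2 := by
    rw [hx]; linarith [sq_nonneg (γ.m₁ t / 4 + 3 * u / 2)]
  have hysq : y ^ 2 ≤ 2 * w ^ 2 + γ.m₂ t ^ 2 / 2 := by
    rw [hy]; linarith [sq_nonneg (w - γ.m₂ t / 2)]
  have hnumerator : |2 * w * u + y * x| ≤ 7 * γ.ξ t :=
    calc |2 * w * u + y * x| ≤ (w ^ 2 + u ^ 2) + (y ^ 2 + x ^ 2) / 2 := by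
          rw [abs_le]
          constructor <;> linarith [sq_nonneg (w + u), sq_nonneg (w - u), sq_nonneg (y + x),
            sq_nonneg (y - x)]
      _ ≤ 7 * γ.ξ t := by
          linarith [sq_nonneg w, sq_nonneg (γ.m₁ t), sq_nonneg (γ.m₂ t), sq_nonneg (γ.m₃ t)]
  linarith [mul_le_mul_of_nonneg_right hnumerator hξ.le]

theorem tendsto_relativeAngularMomentum (hγ : γ.IsCollisionTail a b) :
    Tendsto γ.relativeAngularMomentum (𝓝[<] b) (𝓝 0) := by
  have hlim : Tendsto (fun t => 2 / √(γ.ξ t)) (𝓝[<] b) (𝓝 0) :=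
    (Real.tendsto_sqrt_atTop.comp hγ.tendsto_ξ).const_div_atTop 2
  refine squeeze_zero_norm' ?_ hlim
  filter_upwards [Ioo_mem_nhdsLT hγ.lt] with t ht
  replace ht := Ioo_subset_Ico_self ht
  have hξ := hγ.ξ_pos ht
  have hsqrt := Real.sq_sqrt hξ.le
  have hw : |γ.transverseMomentum t| ≤ 2 * √(γ.ξ t) := by
    refine abs_le_of_sq_le_sq ?_ (by positivity)
    linarith [hγ.sq_add_sq_le ht, sq_nonneg (γ.radialMomentum t)]
  rw [relativeAngularMomentum, norm_div, Real.norm_eq_abs, Real.norm_of_nonneg hξ.le,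
    div_le_div_iff₀ hξ (Real.sqrt_pos.2 hξ)]
  linarith [mul_le_mul_of_nonneg_right hw (Real.sqrt_nonneg (γ.ξ t))]

theorem abs_transverseMomentum_le_of_isMinOn (hγ : γ.IsCollisionTail a b)
    (hmin : IsMinOn γ.ξ (Ico a b) a) : |γ.transverseMomentum a| ≤ 7 := by
  have hξ := hγ.ξ_pos (left_mem_Ico.2 hγ.lt)
  have hderiv : ∀ t ∈ Ico a b,
      HasDerivAt γ.relativeAngularMomentum (deriv γ.relativeAngularMomentum t) t := fun t ht =>
    (hγ.isSolutionOn.hasDerivAt_relativeAngularMomentum ht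
      (hγ.ξ_pos ht).ne').differentiableAt.hasDerivAt
  have hbound : ∀ t ∈ Ico a b, ‖deriv γ.relativeAngularMomentum t‖ ≤ 7 / γ.ξ a := fun t ht =>
    (hγ.abs_deriv_relativeAngularMomentum_le ht).trans
      (div_le_div_of_nonneg_left (by norm_num) hξ (hmin ht))
  have hle := norm_sub_le_of_tendsto_of_norm_hasDerivAt_le hγ.lt hderiv hbound
    (hγ.tendsto_relativeAngularMomentum)
  rw [zero_sub, norm_neg, relativeAngularMomentum, norm_div, Real.norm_eq_abs,
    Real.norm_of_nonneg hξ.le, div_mul_eq_mul_div, div_le_div_iff_of_pos_right hξ] at hle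
  linarith [hγ.sub_le_one]

theorem le_sq_radialMomentum (hγ : γ.IsCollisionTail a b) (ht : t ∈ Ico a b)
    (hw : |γ.transverseMomentum t| ≤ 7) : γ.ξ t / 2 ≤ γ.radialMomentum t ^ 2 := by
  have hwsq : γ.transverseMomentum t ^ 2 ≤ 7 ^ 2 := sq_le_sq.2 (hw.trans (le_abs_self 7))
  linarith [hγ.le_sq_add_sq ht, hγ.le_ξ t ht]

theorem isMinOn_ξ_left (hγ : γ.IsCollisionTail a b) :
    IsMinOn γ.ξ (Ico a b) a := by
  obtain ⟨s, hs, hmin⟩ := exists_isMinOn_Ico_of_tendsto_atTop hγ.lt hγ.continuousOn_ξ hγ.tendsto_ξ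
  rcases hs.1.eq_or_lt with rfl | has
  · exact hmin
  have hw : |γ.transverseMomentum s| ≤ 7 := (hγ.mono hs).abs_transverseMomentum_le_of_isMinOn
    (hmin.on_subset (Ico_subset_Ico_left hs.1))
  have hcritical : -2 * γ.radialMomentum s * (γ.ξ s ^ 2 + 1) = 0 :=
    (hmin.isLocalMin (Ico_mem_nhds has hs.2)).hasDerivAt_eq_zero
      (hγ.isSolutionOn.hasDerivAt_ξ_radialMomentum hs)
  have hu : γ.radialMomentum s = 0 := by
    have hfactor : γ.ξ s ^ 2 + 1 ≠ 0 := by positivity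
    simpa [hfactor] using hcritical
  have hupos := hγ.le_sq_radialMomentum hs hw
  rw [hu] at hupos
  linarith [hγ.ξ_pos hs]

theorem monotoneOn_ξ (hγ : γ.IsCollisionTail a b) : MonotoneOn γ.ξ (Ico a b) :=
  fun _ ht _ hr htr => (hγ.mono ht).isMinOn_ξ_left ⟨htr, hr.2⟩

theorem abs_transverseMomentum_le (hγ : γ.IsCollisionTail a b) (ht : t ∈ Ico a b) :
    |γ.transverseMomentum t| ≤ 7 :=
  (hγ.mono ht).abs_transverseMomentum_le_of_isMinOn (hγ.mono ht).isMinOn_ξ_left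

theorem radialMomentum_nonpos (hγ : γ.IsCollisionTail a b) (ht : t ∈ Ico a b) :
    γ.radialMomentum t ≤ 0 := by
  have hderiv := hγ.isSolutionOn.hasDerivAt_ξ_radialMomentum ht
  have hnonneg : 0 ≤ -2 * γ.radialMomentum t * (γ.ξ t ^ 2 + 1) := by
    rw [← hderiv.hasDerivWithinAt.derivWithin (uniqueDiffOn_Ico a b t ht)]
    exact hγ.monotoneOn_ξ.derivWithin_nonneg
  linarith [nonneg_of_mul_nonneg_left hnonneg (by positivity)]

theorem sqrt_ξ_le_neg_radialMomentum (hγ : γ.IsCollisionTail a b) (ht : t ∈ Ico a b) :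
    √(γ.ξ t) / 2 ≤ -γ.radialMomentum t := by
  refine le_of_sq_le_sq ?_ (neg_nonneg.2 (hγ.radialMomentum_nonpos ht))
  rw [div_pow, Real.sq_sqrt (hγ.ξ_pos ht).le]
  linarith [hγ.le_sq_radialMomentum ht (hγ.abs_transverseMomentum_le ht), hγ.ξ_pos ht]

theorem integrableOn_ξ (hγ : γ.IsCollisionTail a b) : IntegrableOn γ.ξ (Ioo a b) := by
  refine integrableOn_Ioo_of_sq_mul_sqrt_le_deriv
    (fun t => hγ.isSolutionOn.hasDerivAt_ξ_radialMomentum) (fun t => hγ.ξ_pos)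
    (fun t ht => ?_) hγ.tendsto_ξ
  calc γ.ξ t ^ 2 * √(γ.ξ t) ≤ (γ.ξ t ^ 2 + 1) * (-2 * γ.radialMomentum t) := by
        gcongr
        · linarith
        · linarith [hγ.sqrt_ξ_le_neg_radialMomentum (Ioo_subset_Ico_self ht)]
    _ = -2 * γ.radialMomentum t * (γ.ξ t ^ 2 + 1) := mul_comm _ _

theorem isBigO_one_of_sq_le_casimir (hγ : γ.IsCollisionTail a b) {m : ℝ → ℝ}
    (hm : ∀ t, m t ^ 2 ≤ γ.casimir t) : m =O[𝓝[<] b] (fun _ => (1 : ℝ)) := by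
  refine IsBigO.of_bound √(γ.casimir a) ?_
  filter_upwards [Ioo_mem_nhdsLT hγ.lt] with t ht
  rw [norm_one, mul_one, Real.norm_eq_abs]
  refine Real.abs_le_sqrt ((hm t).trans_eq ?_)
  exact eqOn_const_of_hasDerivAt_zero (convex_Ico a b)
    (fun _ => hγ.isSolutionOn.hasDerivAt_casimir) (left_mem_Ico.2 hγ.lt) (Ioo_subset_Ico_self ht)

theorem isBigO_p (hγ : γ.IsCollisionTail a b) : γ.p =O[𝓝[<] b] γ.ξ := by
  refine IsBigO.of_bound 3 ?_
  filter_upwards [Ioo_mem_nhdsLT hγ.lt] with t ht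
  replace ht := Ioo_subset_Ico_self ht
  have hξ := hγ.le_ξ t ht
  have hcasimir := hγ.casimir_le t ht
  rw [casimir] at hcasimir
  have hu : |γ.radialMomentum t| ≤ 2 * γ.ξ t := abs_le_of_sq_le_sq
    (by nlinarith [hγ.sq_add_sq_le ht, sq_nonneg (γ.transverseMomentum t)]) (by linarith)
  have hm₁ : |γ.m₁ t| ≤ γ.ξ t :=
    abs_le_of_sq_le_sq (by nlinarith [sq_nonneg (γ.m₂ t), sq_nonneg (γ.m₃ t)]) (by linarith)
  calc ‖γ.p t‖ = |γ.radialMomentum t + γ.m₁ t / 2| := by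
        rw [radialMomentum, sub_add_cancel, Real.norm_eq_abs]
    _ ≤ |γ.radialMomentum t| + |γ.m₁ t| / 2 := by
        simpa only [abs_div, abs_two] using abs_add_le (γ.radialMomentum t) (γ.m₁ t / 2)
    _ ≤ 3 * ‖γ.ξ t‖ := by
        rw [Real.norm_of_nonneg (by linarith)]
        linarith

theorem isBigO_transverseMomentum (hγ : γ.IsCollisionTail a b) :
    γ.transverseMomentum =O[𝓝[<] b] (fun _ => (1 : ℝ)) := by
  refine IsBigO.of_bound 7 ?_
  filter_upwards [Ioo_mem_nhdsLT hγ.lt] with t ht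
  rw [norm_one, mul_one]
  exact hγ.abs_transverseMomentum_le (Ioo_subset_Ico_self ht)

theorem isBigO_sphereSpeed (hγ : γ.IsCollisionTail a b) : γ.sphereSpeed =O[𝓝[<] b] γ.ξ := by
  have hmem : ∀ᶠ t in 𝓝[<] b, t ∈ Ico a b :=
    mem_of_superset (Ioo_mem_nhdsLT hγ.lt) Ioo_subset_Ico_self
  have hm₁ : γ.m₁ =O[𝓝[<] b] (fun _ => (1 : ℝ)) := hγ.isBigO_one_of_sq_le_casimir fun t => by
    rw [casimir]; linarith [sq_nonneg (γ.m₂ t), sq_nonneg (γ.m₃ t)]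
  have hm₂ : γ.m₂ =O[𝓝[<] b] (fun _ => (1 : ℝ)) := hγ.isBigO_one_of_sq_le_casimir fun t => by
    rw [casimir]; linarith [sq_nonneg (γ.m₁ t), sq_nonneg (γ.m₃ t)]
  have hm₃ : γ.m₃ =O[𝓝[<] b] (fun _ => (1 : ℝ)) := hγ.isBigO_one_of_sq_le_casimir fun t => by
    rw [casimir]; linarith [sq_nonneg (γ.m₁ t), sq_nonneg (γ.m₂ t)]
  have hw := hγ.isBigO_transverseMomentum
  have hξ := isBigO_refl γ.ξ (𝓝[<] b)
  have hm₁' : deriv γ.m₁ =O[𝓝[<] b] γ.ξ :=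
    EventuallyEq.trans_isBigO (hmem.mono fun t => hγ.isSolutionOn.deriv_m₁) <|
      isBigO_mul_of_isBigO_one (((isBigO_mul_of_isBigO_one hm₂ hw).const_mul_left 2).add
        (isBigO_mul_of_isBigO_one hm₃ hm₃)) hξ
  have hm₂' : deriv γ.m₂ =O[𝓝[<] b] γ.ξ :=
    EventuallyEq.trans_isBigO (hmem.mono fun t => hγ.isSolutionOn.deriv_m₂) <|
      (isBigO_mul_of_isBigO_one hm₃ hγ.isBigO_p).neg_left.sub
        (isBigO_mul_of_isBigO_one ((isBigO_mul_of_isBigO_one hm₁ hw).const_mul_left 2) hξ)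
  have hm₃' : deriv γ.m₃ =O[𝓝[<] b] γ.ξ :=
    EventuallyEq.trans_isBigO (hmem.mono fun t ht => (hγ.isSolutionOn.hasDerivAt_m₃ t ht).deriv) <|
      (isBigO_mul_of_isBigO_one hm₂ hγ.isBigO_p).sub
        (isBigO_mul_of_isBigO_one (isBigO_mul_of_isBigO_one hm₁ hm₃) hξ)
  have hsq := ((hm₁'.pow 2).add (hm₂'.pow 2)).add (hm₃'.pow 2)
  refine (hsq.sqrt (Eventually.of_forall fun t => sq_nonneg (γ.ξ t))).trans ?_
  simpa only [Real.sqrt_sq_eq_abs] using hξ.abs_left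

theorem integrableAtFilter_sphereSpeed (hγ : γ.IsCollisionTail a b) :
    IntegrableAtFilter γ.sphereSpeed (𝓝[<] b) := by
  have hmem : Ioo a b ∈ 𝓝[<] b := Ioo_mem_nhdsLT hγ.lt
  have hmeas : StronglyMeasurableAtFilter γ.sphereSpeed (𝓝[<] b) volume :=
    ⟨Ioo a b, hmem, (hγ.isSolutionOn.continuousOn_sphereSpeed.mono
      Ioo_subset_Ico_self).aestronglyMeasurable measurableSet_Ioo⟩
  exact hγ.isBigO_sphereSpeed.integrableAtFilter hmeas ⟨Ioo a b, hmem, hγ.integrableOn_ξ⟩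

end IsCollisionTail

end ReducedCurve

/-- Along a collision solution with `t* < ∞` and `ξ(t) → +∞` as `t → t*⁻`, the
projection of the solution curve onto the Casimir sphere has finite length: the
integral `∫_{t₀}^{t*} √(m₁\'(t)² + m₂\'(t)² + m₃\'(t)²) dt` is finite. -/
theorem finite_length_on_casimir_sphere
    (t0 tstar : ℝ) (ht0 : t0 < tstar)
    (m1 m2 m3 xi p : ℝ → ℝ)
    (hm1 : ∀ t ∈ Set.Ico t0 tstar,
      HasDerivAt m1 (xi t * (-(m2 t)^2 + (m3 t)^2 + 2 * m2 t * m3 t * xi t)) t)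
    (hm2 : ∀ t ∈ Set.Ico t0 tstar,
      HasDerivAt m2 (m1 t * m2 t * xi t - m3 t * p t - 2 * m1 t * m3 t * (xi t)^2) t)
    (hm3 : ∀ t ∈ Set.Ico t0 tstar,
      HasDerivAt m3 (m2 t * p t - m1 t * m3 t * xi t) t)
    (hxi : ∀ t ∈ Set.Ico t0 tstar,
      HasDerivAt xi (-((xi t)^2 + 1) * (2 * p t - m1 t)) t)
    (hp : ∀ t ∈ Set.Ico t0 tstar,
      HasDerivAt p (-((xi t)^2 + 1) * (1 + m2 t * m3 t - 2 * (m3 t)^2 * xi t)) t)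
    (hcoll : Tendsto xi (nhdsWithin tstar (Set.Iio tstar)) atTop) :
    MeasureTheory.IntegrableOn
      (fun t => Real.sqrt ((deriv m1 t)^2 + (deriv m2 t)^2 + (deriv m3 t)^2))
      (Set.Ico t0 tstar) := by
  let γ : ReducedCurve := ⟨m1, m2, m3, xi, p⟩
  have hγ : γ.IsSolutionOn (Ico t0 tstar) := ⟨hm1, hm2, hm3, hxi, hp⟩
  obtain ⟨_, htail⟩ := hγ.exists_isCollisionTail ht0 hcoll
  exact integrableOn_Ico_of_integrableAtFilter_nhdsLT
    (hγ.continuousOn_sphereSpeed.locallyIntegrableOn measurableSet_Ico)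
    htail.integrableAtFilter_sphereSpeed
end
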